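/- arXiv:2603.01173 — 4 statements merged into one kernel-verified Lean document; each statement's English description precedes it below -/
import Mathlib

section
/- (Composition of Lemmas 4.1 and 4.2.) Let a > 0, h > 0, Δt > 0, 0 < K, and let d(t), v_ℓ(t+Δt), v_h(t+Δt), v̂⁻ be real numbers with D := d(t) + (v_ℓ(t+Δt) − v_h(t+Δt))·Δt > 0, and set v_thr := a·(−h + √(h² + (2/a)·D)). If the measurement z satisfies z > (v_thr − (1 − K)·v̂⁻)/K, then the Kalman-updated estimate v̂⁺ := v̂⁻ + K·(z − v̂⁻) satisfies v̂⁺ > v_thr, and consequently the predicted next-step gap violates the safe-distance constraint evaluated at v̂⁺: D < h·v̂⁺ + (v̂⁺)²/(2a), provided v̂⁺ ≥ 0. -/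
/-- The scalar Kalman measurement update of the prediction `v` with gain `K` and measurement `z`. -/
def kalmanUpdate {R : Type*} [Ring R] (K v z : R) : R := v + K * (z - v)

/-- The ACC safe following distance at host speed `v`, for headway time `h` and comfortable braking
deceleration `a`. -/
noncomputable def safeDistance (a h v : ℝ) : ℝ := h * v + v ^ 2 / (2 * a)

/-- The threshold speed `v_thr` for a gap `D`: the larger root `v` of `safeDistance a h v = D`,
provided `0 < a` and `0 ≤ h ^ 2 + 2 / a * D`; for a negative radicand `√` is `0` and the value
is the vertex `-(a * h)`. -/
noncomputable def speedThreshold (a h D : ℝ) : ℝ := a * (-h + √(h ^ 2 + 2 / a * D))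

theorem lt_kalmanUpdate_iff {𝕜 : Type*} [Field 𝕜] [LinearOrder 𝕜] [IsStrictOrderedRing 𝕜]
    {K t v z : 𝕜} (hK : 0 < K) :
    t < kalmanUpdate K v z ↔ (t - (1 - K) * v) / K < z := by
  have update_eq : kalmanUpdate K v z = (1 - K) * v + z * K := by
    unfold kalmanUpdate
    ring
  rw [update_eq, div_lt_iff₀ hK, sub_lt_iff_lt_add']

theorem safeDistance_eq_mul_sq_sub_sq {a : ℝ} (ha : a ≠ 0) (h v : ℝ) :
    safeDistance a h v = a / 2 * ((h + v / a) ^ 2 - h ^ 2) := by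
  unfold safeDistance
  field

/-- The condition `-(a * h) < v` places `v` to the right of the vertex of the parabola
`safeDistance a h`. -/
theorem speedThreshold_lt_iff {a h D v : ℝ} (ha : 0 < a) (hv : -(a * h) < v) :
    speedThreshold a h D < v ↔ D < safeDistance a h v := by
  have shifted_pos : 0 < h + v / a := by
    rw [← neg_lt_iff_pos_add', lt_div_iff₀' ha, mul_neg]
    exact hv
  calc
    speedThreshold a h D < v ↔ √(h ^ 2 + 2 / a * D) < h + v / a := by
      rw [speedThreshold, ← lt_div_iff₀' ha, neg_add_lt_iff_lt_add]
    _ ↔ h ^ 2 + 2 / a * D < (h + v / a) ^ 2 := Real.sqrt_lt' shifted_pos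
    _ ↔ D / (a / 2) < (h + v / a) ^ 2 - h ^ 2 := by
      rw [← lt_sub_iff_add_lt', div_div_eq_mul_div, div_mul_eq_mul_div, mul_comm 2 D]
    _ ↔ D < safeDistance a h v := by
      rw [div_lt_iff₀' (half_pos ha), safeDistance_eq_mul_sq_sub_sq ha.ne']

/-- Composition of Lemmas 4.1 and 4.2: if the (possibly spoofed) measurement
exceeds `(v_thr − (1−K)·v̂⁻)/K`, then the Kalman-updated estimate
`v̂⁺ := v̂⁻ + K·(z − v̂⁻)` exceeds the threshold `v_thr`, and, provided
`v̂⁺ ≥ 0`, the predicted next-step gap `D` violates the safe-distance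
constraint evaluated at `v̂⁺`. -/
theorem stmt_5 (a h Δt K d vl vh vminus z : ℝ)
    (ha : 0 < a) (hh : 0 < h) (hΔt : 0 < Δt) (hK : 0 < K)
    (hD : 0 < d + (vl - vh) * Δt)
    (hz : z > (a * (-h + Real.sqrt (h ^ 2 + (2 / a) * (d + (vl - vh) * Δt)))
              - (1 - K) * vminus) / K) :
    vminus + K * (z - vminus)
        > a * (-h + Real.sqrt (h ^ 2 + (2 / a) * (d + (vl - vh) * Δt)))
      ∧ (0 ≤ vminus + K * (z - vminus) →
          d + (vl - vh) * Δt
            < h * (vminus + K * (z - vminus))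
              + (vminus + K * (z - vminus)) ^ 2 / (2 * a)) := by
  have threshold_lt : speedThreshold a h (d + (vl - vh) * Δt) < kalmanUpdate K vminus z :=
    (lt_kalmanUpdate_iff hK).2 hz
  refine ⟨threshold_lt, fun update_nonneg => ?_⟩
  have vertex_lt : -(a * h) < kalmanUpdate K vminus z :=
    (neg_lt_zero.2 (mul_pos ha hh)).trans_le update_nonneg
  exact (speedThreshold_lt_iff ha vertex_lt).1 threshold_lt
end

section
/- (Theorem 6.1, part A: braking-distance safety at detection.) Let a > 0, h > 0, Δt > 0, N, M ∈ ℕ with M ≤ N and N·Δt ≤ h, and let d, v_h, v_ℓ : ℕ → ℝ satisfy d(k+1) = d(k) + (v_ℓ(k+1) − v_h(k+1))·Δt for all k, with v_ℓ(k) ≥ 0 for all k. Suppose: (i) there is v̄ with 0 ≤ v̄ and v_h(j) ≤ v̄ for all j = 1, …, M, and v̄ ≤ v_h(0); (ii) d(0) ≥ h·v_h(0) + v_h(0)²/(2a); and (iii) v_h(M) ≥ 0. Then d(M) ≥ v_h(M)²/(2a). -/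
/-!
Since the lead vehicle never moves backwards, each step shrinks the gap by at most `v_h(0)·Δt`.
Detection takes at most `h / Δt` steps, so the total loss is covered by the reaction distance
`h·v_h(0)`. What remains is the braking distance at the initial speed, which dominates the one at
the detection speed because the host has not sped up.
-/

theorem sub_nsmul_le_of_forall_sub_le {G : Type*} [AddCommGroup G] [PartialOrder G]
    [IsOrderedAddMonoid G] {u : ℕ → G} {c : G} {n : ℕ} (hu : ∀ k < n, u k - c ≤ u (k + 1)) :
    u 0 - n • c ≤ u n := by
  induction n with
  | zero => simp
  | succ n ih =>
    calc u 0 - (n + 1) • c = u 0 - n • c - c := by rw [succ_nsmul, sub_sub]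
      _ ≤ u n - c := sub_le_sub_right (ih fun k hk => hu k (hk.trans n.lt_succ_self)) c
      _ ≤ u (n + 1) := hu n n.lt_succ_self

section Gap

variable {R : Type*} [CommRing R] [PartialOrder R] [IsOrderedRing R]
  {h Δt : R} {n : ℕ} {d vh vl : ℕ → R}

theorem initial_gap_sub_le_gap {v : R} (hΔt : 0 ≤ Δt)
    (hrec : ∀ k < n, d (k + 1) = d k + (vl (k + 1) - vh (k + 1)) * Δt)
    (hvl : ∀ k < n, 0 ≤ vl (k + 1)) (hvh : ∀ k < n, vh (k + 1) ≤ v) :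
    d 0 - n * Δt * v ≤ d n := by
  have step_loss : ∀ k < n, d k - v * Δt ≤ d (k + 1) := fun k hk =>
    calc d k - v * Δt = d k + (0 - v) * Δt := by ring
      _ ≤ d k + (vl (k + 1) - vh (k + 1)) * Δt := by
        gcongr
        exacts [hvl k hk, hvh k hk]
      _ = d (k + 1) := (hrec k hk).symm
  calc d 0 - n * Δt * v = d 0 - n • (v * Δt) := by rw [nsmul_eq_mul]; ring
    _ ≤ d n := sub_nsmul_le_of_forall_sub_le step_loss

theorem stmt_9_general {brake : R → R} (hbrake : MonotoneOn brake (Set.Ici 0))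
    (hΔt : 0 ≤ Δt) (hdelay : n * Δt ≤ h)
    (hrec : ∀ k < n, d (k + 1) = d k + (vl (k + 1) - vh (k + 1)) * Δt)
    (hvl : ∀ k < n, 0 ≤ vl (k + 1)) (hvh : ∀ k < n, vh (k + 1) ≤ vh 0)
    (hsafe : h * vh 0 + brake (vh 0) ≤ d 0) (hvn : 0 ≤ vh n) :
    brake (vh n) ≤ d n := by
  have hvn0 : vh n ≤ vh 0 := by
    cases n with
    | zero => exact le_rfl
    | succ m => exact hvh m m.lt_succ_self
  have hv0 : 0 ≤ vh 0 := hvn.trans hvn0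
  calc brake (vh n) ≤ brake (vh 0) := hbrake hvn hv0 hvn0
    _ ≤ d 0 - h * vh 0 := le_sub_iff_add_le'.mpr hsafe
    _ ≤ d 0 - n * Δt * vh 0 := by gcongr
    _ ≤ d n := initial_gap_sub_le_gap hΔt hrec hvl hvh

end Gap

section Braking

variable {K : Type*} [Field K]

/-- The distance `v² / (2a)` covered while braking from speed `v` to rest at the constant
deceleration `a`; it takes the junk value `0` at `a = 0`. -/
def brakingDistance (a v : K) : K := v ^ 2 / (2 * a)

theorem monotoneOn_brakingDistance [LinearOrder K] [IsStrictOrderedRing K] {a : K} (ha : 0 ≤ a) :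
    MonotoneOn (brakingDistance a) (Set.Ici 0) := by
  intro v (hv : 0 ≤ v) w _ hvw
  unfold brakingDistance
  gcongr

end Braking

/-- Theorem 6.1, part A (braking-distance safety at detection): under the gap
recursion, bounded detection delay (`M ≤ N`, `N·Δt ≤ h`), nonnegative lead
speed, a host-speed upper bound `v̄ ≤ v_h(0)` over the detection window, a safe
initial gap `d(0) ≥ h·v_h(0) + v_h(0)²/(2a)`, and `v_h(M) ≥ 0`, the gap at
detection satisfies `d(M) ≥ v_h(M)²/(2a)`. -/
theorem stmt_9 (a h Δt : ℝ) (N M : ℕ) (d vh vl : ℕ → ℝ) (vbar : ℝ)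
    (ha : 0 < a) (hh : 0 < h) (hΔt : 0 < Δt)
    (hMN : M ≤ N) (hNh : (N : ℝ) * Δt ≤ h)
    (hrec : ∀ k, d (k + 1) = d k + (vl (k + 1) - vh (k + 1)) * Δt)
    (hvl : ∀ k, 0 ≤ vl k)
    (hvbar0 : 0 ≤ vbar) (hbound : ∀ j, 1 ≤ j → j ≤ M → vh j ≤ vbar)
    (hvbar : vbar ≤ vh 0)
    (hsafe : d 0 ≥ h * vh 0 + (vh 0) ^ 2 / (2 * a))
    (hvM : 0 ≤ vh M) :
    d M ≥ (vh M) ^ 2 / (2 * a) := by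
  have hdelay : M * Δt ≤ h := le_trans (by gcongr) hNh
  exact stmt_9_general (monotoneOn_brakingDistance ha.le) hΔt.le hdelay (fun k _ => hrec k)
    (fun k _ => hvl (k + 1)) (fun k hk => (hbound (k + 1) k.succ_pos hk).trans hvbar) hsafe hvM
end

section
/- (Monotonicity of the braking margin under emergency braking.) Let a > 0, Δt > 0, and let d(t), d(t+Δt), v_h(t), v_h(t+Δt), v_ℓ(t+Δt) be real numbers satisfying v_h(t+Δt) = v_h(t) − a·Δt, d(t+Δt) = d(t) + (v_ℓ(t+Δt) − v_h(t+Δt))·Δt, and v_ℓ(t+Δt) ≥ 0. Then Φ(t+Δt) ≥ Φ(t), where Φ(s) := d(s) − v_h(s)²/(2a). -/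
/-- The braking margin `Φ`: the part of the gap `d` left over by the distance `v² / (2a)` that a
host at speed `v` covers before stopping under constant deceleration `a`. -/
def brakingMargin {K : Type*} [Field K] (a d v : K) : K :=
  d - v ^ 2 / (2 * a)

section Field

variable {K : Type*} [Field K] [NeZero (2 : K)] {a : K}

theorem sq_div_sub_sq_sub_mul_div (ha : a ≠ 0) (v Δt : K) :
    v ^ 2 / (2 * a) - (v - a * Δt) ^ 2 / (2 * a) = (v - a * Δt / 2) * Δt := by
  have h2 : (2 : K) ≠ 0 := two_ne_zero
  field_simp
  ring

/- The gap recursion moves the host at its end-of-step speed `v - a * Δt`, whereas the braking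
distance shrinks at the mean speed `v - a * Δt / 2`; the difference is the term `a * Δt / 2`. -/
theorem brakingMargin_step_sub_brakingMargin (ha : a ≠ 0) (d v vl Δt : K) :
    brakingMargin a (d + (vl - (v - a * Δt)) * Δt) (v - a * Δt) - brakingMargin a d v =
      (vl + a * Δt / 2) * Δt := by
  calc
    _ = (vl - (v - a * Δt)) * Δt + (v ^ 2 / (2 * a) - (v - a * Δt) ^ 2 / (2 * a)) := by
      unfold brakingMargin
      ring
    _ = (vl - (v - a * Δt)) * Δt + (v - a * Δt / 2) * Δt := by
      rw [sq_div_sub_sq_sub_mul_div ha]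
    _ = (vl + a * Δt / 2) * Δt := by
      field_simp
      ring

end Field

theorem stmt_11_general {K : Type*} [Field K] [LinearOrder K] [IsStrictOrderedRing K]
    {a Δt d dnext v vnext vlnext : K} (ha : a ≠ 0) (hΔt : 0 ≤ Δt)
    (hv : vnext = v - a * Δt) (hd : dnext = d + (vlnext - vnext) * Δt)
    (hvl : -(a * Δt / 2) ≤ vlnext) :
    brakingMargin a d v ≤ brakingMargin a dnext vnext := by
  subst hd hv
  rw [← sub_nonneg, brakingMargin_step_sub_brakingMargin ha]
  exact mul_nonneg (neg_le_iff_add_nonneg.mp hvl) hΔt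

/-- Monotonicity of the braking margin under emergency braking: with
`v_h(t+Δt) = v_h(t) − a·Δt`, the gap recursion, and nonnegative lead speed,
the braking margin `Φ(s) := d(s) − v_h(s)²/(2a)` does not decrease. -/
theorem stmt_11 (a Δt dt dnext vht vhnext vlnext : ℝ)
    (ha : 0 < a) (hΔt : 0 < Δt)
    (hv : vhnext = vht - a * Δt)
    (hd : dnext = dt + (vlnext - vhnext) * Δt)
    (hvl : 0 ≤ vlnext) :
    dnext - vhnext ^ 2 / (2 * a) ≥ dt - vht ^ 2 / (2 * a) := by
  have hlead : -(a * Δt / 2) ≤ vlnext := (neg_nonpos.mpr (by positivity)).trans hvl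
  exact stmt_11_general ha.ne' hΔt.le hv hd hlead
end

section
/- (Theorem 6.1, part B: invariance of braking-distance safety after detection.) Let a > 0, Δt > 0, and let v, d : ℕ → ℝ and ℓ : ℕ → ℝ be sequences satisfying v(k+1) = v(k) − a·Δt and d(k+1) = d(k) + (ℓ(k+1) − v(k+1))·Δt for all k, with ℓ(k) ≥ 0 for all k. If d(0) ≥ v(0)²/(2a), then for every k ∈ ℕ, d(k) ≥ v(k)²/(2a) ≥ 0; in particular the inter-vehicle gap d(k) never becomes negative, so a collision is avoided. -/
/-!
The safety margin `d(k) - v(k)²/(2a)` is a monotone quantity. In one sampling period the braking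
distance shrinks by `v(k)·Δt - a·Δt²/2`, while the host, moving at its reduced speed `v(k+1)`,
uses up only `v(k)·Δt - a·Δt²` of the gap. The margin therefore grows by `(ℓ(k+1) + a·Δt/2)·Δt`,
so even a lead vehicle reversing at speed at most `a·Δt/2` keeps it from decreasing.
-/

section BrakingDistance

variable {K : Type*} [Field K]

theorem brakingDistance_sub_mul [NeZero (2 : K)] {a : K} (ha : a ≠ 0) (v t : K) :
    brakingDistance a (v - a * t) = brakingDistance a v - (v * t - a * t ^ 2 / 2) := by
  unfold brakingDistance
  field_simp
  ring

theorem gap_sub_brakingDistance_succ [NeZero (2 : K)] {a Δt : K} {v d ℓ : ℕ → K} (ha : a ≠ 0)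
    (hv : ∀ k, v (k + 1) = v k - a * Δt)
    (hd : ∀ k, d (k + 1) = d k + (ℓ (k + 1) - v (k + 1)) * Δt) (k : ℕ) :
    d (k + 1) - brakingDistance a (v (k + 1)) =
      d k - brakingDistance a (v k) + (ℓ (k + 1) + a * Δt / 2) * Δt := by
  rw [hd, hv, brakingDistance_sub_mul ha]
  field_simp
  ring

variable [LinearOrder K] [IsStrictOrderedRing K]

theorem brakingDistance_nonneg {a : K} (ha : 0 ≤ a) (v : K) : 0 ≤ brakingDistance a v := by
  unfold brakingDistance
  positivity

theorem monotone_gap_sub_brakingDistance {a Δt : K} {v d ℓ : ℕ → K} (ha : a ≠ 0) (hΔt : 0 ≤ Δt)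
    (hv : ∀ k, v (k + 1) = v k - a * Δt)
    (hd : ∀ k, d (k + 1) = d k + (ℓ (k + 1) - v (k + 1)) * Δt)
    (hℓ : ∀ k, -(a * Δt / 2) ≤ ℓ (k + 1)) :
    Monotone fun k ↦ d k - brakingDistance a (v k) := by
  refine monotone_nat_of_le_succ fun k ↦ ?_
  have growth_nonneg : 0 ≤ (ℓ (k + 1) + a * Δt / 2) * Δt :=
    mul_nonneg (neg_le_iff_add_nonneg.mp (hℓ k)) hΔt
  rw [gap_sub_brakingDistance_succ ha hv hd]
  exact le_add_of_nonneg_right growth_nonneg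

theorem stmt_12_general {a Δt : K} {v d ℓ : ℕ → K} (ha : 0 < a) (hΔt : 0 ≤ Δt)
    (hv : ∀ k, v (k + 1) = v k - a * Δt)
    (hd : ∀ k, d (k + 1) = d k + (ℓ (k + 1) - v (k + 1)) * Δt)
    (hℓ : ∀ k, -(a * Δt / 2) ≤ ℓ (k + 1)) (h0 : brakingDistance a (v 0) ≤ d 0) (k : ℕ) :
    brakingDistance a (v k) ≤ d k ∧ 0 ≤ brakingDistance a (v k) := by
  have initial_margin_le : d 0 - brakingDistance a (v 0) ≤ d k - brakingDistance a (v k) :=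
    monotone_gap_sub_brakingDistance ha.ne' hΔt hv hd hℓ k.zero_le
  exact ⟨sub_nonneg.mp ((sub_nonneg.mpr h0).trans initial_margin_le),
    brakingDistance_nonneg ha.le _⟩

end BrakingDistance

/-- Theorem 6.1, part B (invariance of braking-distance safety after
detection): under emergency braking `v(k+1) = v(k) − a·Δt`, the gap recursion,
nonnegative lead speed, and `d(0) ≥ v(0)²/(2a)`, every step satisfies
`d(k) ≥ v(k)²/(2a) ≥ 0`; in particular the gap never becomes negative. -/
theorem stmt_12 (a Δt : ℝ) (v d ℓ : ℕ → ℝ)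
    (ha : 0 < a) (hΔt : 0 < Δt)
    (hv : ∀ k, v (k + 1) = v k - a * Δt)
    (hd : ∀ k, d (k + 1) = d k + (ℓ (k + 1) - v (k + 1)) * Δt)
    (hℓ : ∀ k, 0 ≤ ℓ k)
    (h0 : d 0 ≥ v 0 ^ 2 / (2 * a)) :
    ∀ k : ℕ, d k ≥ v k ^ 2 / (2 * a) ∧ v k ^ 2 / (2 * a) ≥ 0 := by
  have hℓ' (k : ℕ) : -(a * Δt / 2) ≤ ℓ (k + 1) := by linarith [hℓ (k + 1), mul_pos ha hΔt]
  exact stmt_12_general ha hΔt.le hv hd hℓ' h0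
end
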